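/- Ancestor characterization of last tokens: let s be a nonempty string and x a canonical token. Then x ∈ P(θ(s)) if and only if there exists a stage k with 0 ≤ k ≤ m such that x is the last element of the list φ_k(s). -/

import Mathlib

/-!
Common BPE formalization preamble.

A token is a (nonempty) string over the alphabet `α`, modeled as `List α`.
A merge rule is a pair of tokens; a dictionary is an ordered list of rules
(earlier rules have strictly higher priority).
-/

namespace BPE

variable {α : Type*} [DecidableEq α]

/-- A token is a string over the alphabet (nonemptiness is imposed by hypotheses). -/
abbrev Token (α : Type*) := List α

/-- A merge rule is an ordered pair of tokens. -/
abbrev Rule (α : Type*) := Token α × Token α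

/-- A dictionary is an ordered list of merge rules; earlier = higher priority. -/
abbrev Dict (α : Type*) := List (Rule α)

/-- Apply a single merge rule to a token list, scanning left to right and replacing
each adjacent occurrence of `r.1` followed by `r.2` by the concatenated token,
resuming the scan after the newly formed token (no overlaps). -/
def applyRule (r : Rule α) : List (Token α) → List (Token α)
  | [] => []
  | [t] => [t]
  | t :: u :: rest =>
      if t = r.1 ∧ u = r.2 then (r.1 ++ r.2) :: applyRule r rest
      else t :: applyRule r (u :: rest)

/-- `φ₀(s)`: the list of single-character tokens of `s`. -/
def phi0 (s : List α) : List (Token α) := s.map (fun c => [c])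

/-- `φ_k(s)`: the token list after applying the first `k` rules of `D` to `s`. -/
def phiK (D : Dict α) (k : ℕ) (s : List α) : List (Token α) :=
  (D.take k).foldl (fun φ r => applyRule r φ) (phi0 s)

/-- The BPE tokenization `𝕋_D(s)`. -/
def tokenize (D : Dict α) (s : List α) : List (Token α) :=
  phiK D D.length s

/-- Detokenization `π`: concatenation of the tokens. -/
def detok (φ : List (Token α)) : List α := φ.flatten

/-- A dictionary is valid if all rule components are genuine (nonempty) tokens. -/
def ValidDict (D : Dict α) : Prop := ∀ r ∈ D, r.1 ≠ [] ∧ r.2 ≠ []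

/-- A token `t` is canonical if `𝕋_D(t) = [t]`. -/
def IsCanonical (D : Dict α) (t : Token α) : Prop := tokenize D t = [t]

/-- The last token `θ(s)`: last element of `𝕋_D(s)` (defaulting to `[]`). -/
def theta (D : Dict α) (s : List α) : Token α := (tokenize D s).getLastD []

/-- `j` (0-based) is the index of the canonical rule of `t`:
`φ_j(t)` has exactly two tokens and `φ_{j+1}(t) = [t]`. -/
def IsCanonicalRuleIdx (D : Dict α) (t : Token α) (j : ℕ) : Prop :=
  j < D.length ∧ (phiK D j t).length = 2 ∧ phiK D (j + 1) t = [t]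

open Classical in
/-- The (0-based) index of the canonical rule of `t` (junk value `0` if none exists). -/
noncomputable def canonIdx (D : Dict α) (t : Token α) : ℕ :=
  if h : ∃ j, IsCanonicalRuleIdx D t j then h.choose else 0

/-- Predecessor `pre(t)`: first token of the two-token stage `φ_{j-1}(t)`. -/
noncomputable def pre (D : Dict α) (t : Token α) : Token α :=
  (phiK D (canonIdx D t) t).headD []

/-- Successor `suc(t)`: second token of the two-token stage `φ_{j-1}(t)`. -/
noncomputable def suc (D : Dict α) (t : Token α) : Token α :=
  (phiK D (canonIdx D t) t).getLastD []

/-- `InPath D x a` means `a ∈ P(x)`: `a` is obtained from `x` by iterating `suc`,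
i.e. `a` lies on the ancestor path of `x` in the Successor Forest. -/
def InPath (D : Dict α) (x a : Token α) : Prop :=
  ∃ n : ℕ, (suc D)^[n] x = a

/-- `s` with the suffix `u` removed. -/
def dropSuffix (s u : List α) : List α := s.take (s.length - u.length)

/-- The Prefix Last-Token Condition of the canonical suffix token `t`
with respect to the string `s`. Atomic tokens satisfy it by definition;
a non-atomic token must satisfy Reachability and Priority dominance. -/
def PLTC (D : Dict α) (s t : Token α) : Prop :=
  t.length = 1 ∨
    (1 < t.length ∧
      InPath D (theta D (dropSuffix s (suc D t))) (pre D t) ∧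
      (theta D (dropSuffix s (suc D t)) ≠ pre D t →
        ∀ u : Token α, 1 < u.length → IsCanonical D u → suc D u = pre D t →
          InPath D (theta D (dropSuffix s (suc D t))) u →
          canonIdx D t < canonIdx D u))

/-!
A rule only merges adjacent tokens, so a token boundary of `φ_k(s)` is a boundary of every earlier
`φ_i(s)`, and the two sides of it evolve independently up to stage `k`. Applied to the boundary
before the last token `y` of `φ_k(s)`, this shows that `y` is canonical and that `φ_i(s)` and
`φ_i(y)` end in the same token for all `i ≤ k`. Hence the last tokens of `y` over all stages are
those of `s` up to stage `k`.

For a canonical non-atomic `t`, the stage just before its canonical rule is `[pre t, suc t]`, so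
the last tokens of `t` are those of `suc t` together with `t` itself. By induction on the length
they form the ancestor path of `t`, and the case `t = θ(s)`, `k = m` gives the theorem.
-/

section MergeRules

variable {r : Rule α} {D : Dict α} {φ a b : List (Token α)} {t : Token α}

theorem applyRule_cons_cons (r : Rule α) (φ : List (Token α)) :
    applyRule r (r.1 :: r.2 :: φ) = (r.1 ++ r.2) :: applyRule r φ := by
  rw [applyRule, if_pos ⟨rfl, rfl⟩]

theorem applyRule_cons_of_head?_ne (h : t = r.1 → φ.head? ≠ some r.2) :
    applyRule r (t :: φ) = t :: applyRule r φ := by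
  rcases φ with _ | ⟨u, φ⟩
  · rfl
  · rw [applyRule, if_neg fun ⟨ht, hu⟩ => h ht (congrArg some hu)]

theorem scan_induction {β : Type*} (r : Rule β) {motive : List (Token β) → Prop} (nil : motive [])
    (merge : ∀ φ, motive φ → motive (r.1 :: r.2 :: φ))
    (skip : ∀ t φ, (t = r.1 → φ.head? ≠ some r.2) → motive φ → motive (t :: φ))
    (φ : List (Token β)) : motive φ := by
  classical
  induction φ using applyRule.induct r with
  | case1 => exact nil
  | case2 t => exact skip t [] (by simp) nil
  | case3 t u φ h ih =>
    obtain ⟨rfl, rfl⟩ := h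
    exact merge φ ih
  | case4 t u φ h ih => exact skip t (u :: φ) (by simpa using h) ih

theorem flatten_applyRule (r : Rule α) (φ : List (Token α)) :
    (applyRule r φ).flatten = φ.flatten := by
  induction φ using scan_induction r with
  | nil => rfl
  | merge φ ih => simp [applyRule_cons_cons, ih]
  | skip t φ h ih => simp [applyRule_cons_of_head?_ne h, ih]

theorem nil_notMem_applyRule (h : [] ∉ φ) : [] ∉ applyRule r φ := by
  induction φ using scan_induction r with
  | nil => exact h
  | merge φ ih => simp_all [applyRule_cons_cons]
  | skip t φ ht ih => simp_all [applyRule_cons_of_head?_ne ht]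

theorem length_le_two_mul_length_applyRule (r : Rule α) (φ : List (Token α)) :
    φ.length ≤ 2 * (applyRule r φ).length := by
  induction φ using scan_induction r with
  | nil => simp
  | merge φ ih =>
    simp only [applyRule_cons_cons, List.length_cons]
    lia
  | skip t φ h ih =>
    simp only [applyRule_cons_of_head?_ne h, List.length_cons]
    lia

theorem eq_singleton_or_length_eq_two_of_applyRule_eq (h : applyRule r φ = [t]) :
    φ = [t] ∨ φ.length = 2 := by
  have hlen : φ.length ≤ 2 := by simpa [h] using length_le_two_mul_length_applyRule r φ
  match φ, h, hlen with
  | [_], h, _ => exact .inl h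
  | [_, _], _, _ => exact .inr rfl

theorem exists_append_of_applyRule_eq_append (h : applyRule r φ = a ++ b) :
    ∃ a₀ b₀, φ = a₀ ++ b₀ ∧ applyRule r a₀ = a ∧ applyRule r b₀ = b := by
  induction φ using scan_induction r generalizing a with
  | nil =>
    obtain ⟨rfl, rfl⟩ := List.append_eq_nil_iff.1 h.symm
    exact ⟨[], [], rfl, rfl, rfl⟩
  | merge φ ih =>
    rcases a with _ | ⟨u, a⟩
    · exact ⟨[], _, rfl, rfl, h⟩
    · rw [applyRule_cons_cons, List.cons_append, List.cons.injEq] at h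
      obtain ⟨rfl, hφ⟩ := h
      obtain ⟨a₀, b₀, rfl, rfl, hb⟩ := ih hφ
      exact ⟨r.1 :: r.2 :: a₀, b₀, rfl, applyRule_cons_cons r a₀, hb⟩
  | skip t φ ht ih =>
    rcases a with _ | ⟨u, a⟩
    · exact ⟨[], _, rfl, rfl, h⟩
    · rw [applyRule_cons_of_head?_ne ht, List.cons_append, List.cons.injEq] at h
      obtain ⟨rfl, hφ⟩ := h
      obtain ⟨a₀, b₀, rfl, rfl, hb⟩ := ih hφ
      have ht₀ : t = r.1 → a₀.head? ≠ some r.2 := fun htr ha₀ =>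
        ht htr (by simp [List.head?_append, ha₀])
      exact ⟨t :: a₀, b₀, rfl, applyRule_cons_of_head?_ne ht₀, hb⟩

/-- The result of applying all rules of `D` in order to an arbitrary token list, so that
`φ_k(s)` is `applyRules (D.take k) (phi0 s)`. -/
def applyRules (D : Dict α) (φ : List (Token α)) : List (Token α) :=
  D.foldl (fun ψ r => applyRule r ψ) φ

theorem applyRules_append (D E : Dict α) (φ : List (Token α)) :
    applyRules (D ++ E) φ = applyRules E (applyRules D φ) :=
  List.foldl_append

theorem applyRules_singleton (D : Dict α) (t : Token α) : applyRules D [t] = [t] := by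
  induction D with
  | nil => rfl
  | cons _ _ ih => exact ih

theorem flatten_applyRules (D : Dict α) (φ : List (Token α)) :
    (applyRules D φ).flatten = φ.flatten := by
  induction D generalizing φ with
  | nil => rfl
  | cons r _ ih => exact (ih _).trans (flatten_applyRule r φ)

theorem nil_notMem_applyRules (h : [] ∉ φ) : [] ∉ applyRules D φ := by
  induction D generalizing φ with
  | nil => exact h
  | cons _ _ ih => exact ih (nil_notMem_applyRule h)

theorem exists_append_of_applyRules_eq_append (h : applyRules D φ = a ++ b) :
    ∃ a₀ b₀, applyRules D a₀ = a ∧ applyRules D b₀ = b ∧ φ = a₀ ++ b₀ ∧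
      ∀ i, applyRules (D.take i) φ = applyRules (D.take i) a₀ ++ applyRules (D.take i) b₀ := by
  induction D generalizing φ with
  | nil => exact ⟨a, b, rfl, rfl, h, fun i => by rwa [List.take_nil]⟩
  | cons r D ih =>
    obtain ⟨a₁, b₁, ha, hb, hr, hstage⟩ := ih h
    obtain ⟨a₀, b₀, rfl, rfl, rfl⟩ := exists_append_of_applyRule_eq_append hr
    refine ⟨a₀, b₀, ha, hb, rfl, fun i => ?_⟩
    cases i with
    | zero => rfl
    | succ i => exact hstage i

end MergeRules

section Stages

variable {D : Dict α} {i k : ℕ} {s : List α} {t y : Token α} {a b : List (Token α)}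

theorem phiK_eq_applyRules (D : Dict α) (k : ℕ) (s : List α) :
    phiK D k s = applyRules (D.take k) (phi0 s) :=
  rfl

theorem phiK_succ (hk : k < D.length) (s : List α) :
    phiK D (k + 1) s = applyRule D[k] (phiK D k s) := by
  rw [phiK, List.take_succ_eq_append_getElem hk, List.foldl_append]
  rfl

theorem phiK_of_length_le (hk : D.length ≤ k) (s : List α) : phiK D k s = tokenize D s := by
  simp only [tokenize, phiK, List.take_of_length_le hk, List.take_length]

theorem flatten_phiK (D : Dict α) (k : ℕ) (s : List α) : (phiK D k s).flatten = s := by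
  refine (flatten_applyRules (D.take k) (phi0 s)).trans ?_
  simp [phi0, ← List.flatMap_def]

theorem ne_nil_of_mem_phiK (ht : t ∈ phiK D k s) : t ≠ [] := by
  rintro rfl
  exact nil_notMem_applyRules (by simp [phi0]) ht

theorem phiK_ne_nil (hs : s ≠ []) : phiK D k s ≠ [] := fun h =>
  hs (by simpa [h] using (flatten_phiK D k s).symm)

theorem phiK_atom (D : Dict α) (k : ℕ) (c : α) : phiK D k [c] = [[c]] :=
  applyRules_singleton (D.take k) [c]

theorem phiK_eq_singleton_of_le (hik : i ≤ k) (h : phiK D i s = [t]) : phiK D k s = [t] := by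
  have hsplit : D.take i ++ (D.take k).drop i = D.take k := by
    simpa only [List.take_take, min_eq_left hik] using List.take_append_drop i (D.take k)
  calc phiK D k s = applyRules ((D.take k).drop i) (phiK D i s) := by
        rw [phiK_eq_applyRules D i, ← applyRules_append, hsplit, phiK_eq_applyRules]
    _ = [t] := by rw [h, applyRules_singleton]

theorem isCanonical_of_phiK_eq (h : phiK D k t = [t]) : IsCanonical D t := by
  rcases le_total k D.length with hk | hk
  · exact phiK_eq_singleton_of_le hk h
  · rwa [phiK_of_length_le hk] at h

theorem phiK_flatten_of_eq_append (h : phiK D k s = a ++ b) :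
    phiK D k a.flatten = a ∧ phiK D k b.flatten = b ∧
      ∀ i ≤ k, phiK D i s = phiK D i a.flatten ++ phiK D i b.flatten := by
  obtain ⟨a₀, b₀, ha, hb, hs, hstage⟩ := exists_append_of_applyRules_eq_append h
  obtain ⟨u, v, rfl, rfl, rfl⟩ := List.map_eq_append_iff.1 hs
  have hu : a.flatten = u := ha ▸ flatten_phiK D k u
  have hv : b.flatten = v := hb ▸ flatten_phiK D k v
  rw [hu, hv]
  refine ⟨ha, hb, fun i hi => ?_⟩
  simpa only [List.take_take, min_eq_left hi] using! hstage i

theorem phiK_eq_singleton_of_getLast? (h : (phiK D k s).getLast? = some y) : phiK D k y = [y] := by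
  obtain ⟨a, ha⟩ := List.getLast?_eq_some_iff.1 h
  simpa using (phiK_flatten_of_eq_append ha).2.1

theorem getLast?_phiK_of_le (h : (phiK D k s).getLast? = some y) (hik : i ≤ k) :
    (phiK D i s).getLast? = (phiK D i y).getLast? := by
  obtain ⟨a, ha⟩ := List.getLast?_eq_some_iff.1 h
  have hy : y ≠ [] := ne_nil_of_mem_phiK (List.mem_of_getLast? h)
  have hsplit : phiK D i s = phiK D i a.flatten ++ phiK D i y := by
    simpa using (phiK_flatten_of_eq_append ha).2.2 i hik
  rw [hsplit, List.getLast?_append_of_ne_nil _ (phiK_ne_nil hy)]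

theorem getLast?_tokenize (D : Dict α) (hs : s ≠ []) :
    (tokenize D s).getLast? = some (theta D s) := by
  have hne : tokenize D s ≠ [] := phiK_ne_nil hs
  simp [theta, List.getLast?_eq_some_getLast hne]

end Stages

section Successor

variable {D : Dict α} {t : Token α}

theorem IsCanonical.ne_nil (ht : IsCanonical D t) : t ≠ [] :=
  ne_nil_of_mem_phiK (ht ▸ List.mem_singleton_self t)

theorem IsCanonical.exists_isCanonicalRuleIdx (ht : IsCanonical D t) (hlen : 1 < t.length) :
    ∃ j, IsCanonicalRuleIdx D t j := by
  have hzero : phiK D 0 t ≠ [t] := fun h => by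
    have hone : t.length = 1 := by simpa [phiK, phi0] using congrArg List.length h
    lia
  obtain ⟨j, hj, hj'⟩ : ∃ j, phiK D j t ≠ [t] ∧ phiK D (j + 1) t = [t] :=
    Nat.exists_not_and_succ_of_not_zero_of_exists hzero ⟨D.length, ht⟩
  have hjD : j < D.length := by
    by_contra! hDj
    exact hj ((phiK_of_length_le hDj t).trans ht)
  refine ⟨j, hjD, ?_, hj'⟩
  rw [phiK_succ hjD] at hj'
  exact (eq_singleton_or_length_eq_two_of_applyRule_eq hj').resolve_left hj

theorem IsCanonical.isCanonicalRuleIdx_canonIdx (ht : IsCanonical D t) (hlen : 1 < t.length) :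
    IsCanonicalRuleIdx D t (canonIdx D t) := by
  have hex := ht.exists_isCanonicalRuleIdx hlen
  rw [canonIdx, dif_pos hex]
  exact hex.choose_spec

theorem IsCanonical.phiK_canonIdx (ht : IsCanonical D t) (hlen : 1 < t.length) :
    phiK D (canonIdx D t) t = [pre D t, suc D t] := by
  obtain ⟨-, htwo, -⟩ := ht.isCanonicalRuleIdx_canonIdx hlen
  obtain ⟨p, y, hpy⟩ := List.length_eq_two.1 htwo
  simp [pre, suc, hpy]

theorem IsCanonical.getLast?_phiK_canonIdx (ht : IsCanonical D t) (hlen : 1 < t.length) :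
    (phiK D (canonIdx D t) t).getLast? = some (suc D t) := by
  simp [ht.phiK_canonIdx hlen]

theorem IsCanonical.isCanonical_suc (ht : IsCanonical D t) (hlen : 1 < t.length) :
    IsCanonical D (suc D t) :=
  isCanonical_of_phiK_eq (phiK_eq_singleton_of_getLast? (ht.getLast?_phiK_canonIdx hlen))

theorem IsCanonical.length_suc_lt (ht : IsCanonical D t) (hlen : 1 < t.length) :
    (suc D t).length < t.length := by
  have hstage := ht.phiK_canonIdx hlen
  have hpre : 0 < (pre D t).length :=
    List.length_pos_iff.2 (ne_nil_of_mem_phiK (hstage ▸ List.mem_cons_self))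
  have hsplit : pre D t ++ suc D t = t := by
    simpa [hstage] using flatten_phiK D (canonIdx D t) t
  calc (suc D t).length < (pre D t).length + (suc D t).length := by lia
    _ = t.length := by rw [← List.length_append, hsplit]

/-- A junk value: an atomic token has no canonical rule. -/
theorem suc_atom (D : Dict α) (c : α) : suc D [c] = [c] := by
  simp [suc, phiK_atom]

end Successor

section AncestorPath

variable {D : Dict α} {k : ℕ} {s : List α} {t x y : Token α}

theorem inPath_iff_eq_or_inPath_suc : InPath D t x ↔ x = t ∨ InPath D (suc D t) x := by
  constructor
  · rintro ⟨_ | n, rfl⟩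
    · exact .inl rfl
    · exact .inr ⟨n, rfl⟩
  · rintro (rfl | ⟨n, rfl⟩)
    · exact ⟨0, rfl⟩
    · exact ⟨n + 1, rfl⟩

theorem inPath_atom_iff {c : α} : InPath D [c] x ↔ x = [c] := by
  simp [InPath, Function.iterate_fixed (suc_atom D c), eq_comm]

/-- The tokens that end `φ_k(s)` at some stage `k`. The stage is left unbounded, since `φ_k(s)` is
constant from the length of the dictionary on. -/
def lastTokens (D : Dict α) (s : List α) : Set (Token α) :=
  {x | ∃ k, (phiK D k s).getLast? = some x}

theorem lastTokens_atom (D : Dict α) (c : α) : lastTokens D [c] = {[c]} := by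
  ext x
  simp [lastTokens, phiK_atom, eq_comm]

theorem mem_lastTokens_iff_of_getLast?_phiK (h : (phiK D k s).getLast? = some y) :
    x ∈ lastTokens D y ↔ ∃ i ≤ k, (phiK D i s).getLast? = some x := by
  constructor
  · rintro ⟨i, hi⟩
    rcases le_total i k with hik | hki
    · exact ⟨i, hik, (getLast?_phiK_of_le h hik).trans hi⟩
    · rw [phiK_eq_singleton_of_le hki (phiK_eq_singleton_of_getLast? h)] at hi
      exact ⟨k, le_rfl, h.trans hi⟩
  · rintro ⟨i, hik, hi⟩
    exact ⟨i, (getLast?_phiK_of_le h hik).symm.trans hi⟩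

theorem IsCanonical.lastTokens_eq_insert (ht : IsCanonical D t) (hlen : 1 < t.length) :
    lastTokens D t = insert t (lastTokens D (suc D t)) := by
  have hmerged := (ht.isCanonicalRuleIdx_canonIdx hlen).2.2
  ext x
  rw [Set.mem_insert_iff, mem_lastTokens_iff_of_getLast?_phiK (ht.getLast?_phiK_canonIdx hlen)]
  constructor
  · rintro ⟨k, hk⟩
    rcases le_or_gt k (canonIdx D t) with hle | hlt
    · exact .inr ⟨k, hle, hk⟩
    · rw [phiK_eq_singleton_of_le hlt hmerged] at hk
      exact .inl (by simpa using hk.symm)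
  · rintro (rfl | ⟨k, -, hk⟩)
    · exact ⟨canonIdx D x + 1, by simp [hmerged]⟩
    · exact ⟨k, hk⟩

theorem IsCanonical.inPath_iff_mem_lastTokens (ht : IsCanonical D t) :
    InPath D t x ↔ x ∈ lastTokens D t := by
  induction hn : t.length using Nat.strong_induction_on generalizing t with
  | _ n ih =>
    subst hn
    have hpos : 1 ≤ t.length := List.length_pos_iff.2 ht.ne_nil
    rcases hpos.eq_or_lt with hatom | hlen
    · obtain ⟨c, rfl⟩ := List.length_eq_one_iff.1 hatom.symm
      rw [inPath_atom_iff, lastTokens_atom, Set.mem_singleton_iff]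
    · rw [inPath_iff_eq_or_inPath_suc, ht.lastTokens_eq_insert hlen, Set.mem_insert_iff,
        ih _ (ht.length_suc_lt hlen) (ht.isCanonical_suc hlen) rfl]

theorem ancestor_characterization_general (D : Dict α) (hs : s ≠ []) (x : Token α) :
    InPath D (theta D s) x ↔ ∃ k ≤ D.length, (phiK D k s).getLast? = some x := by
  have hlast : (phiK D D.length s).getLast? = some (theta D s) := getLast?_tokenize D hs
  have hcanonical : IsCanonical D (theta D s) := phiK_eq_singleton_of_getLast? hlast
  rw [hcanonical.inPath_iff_mem_lastTokens, mem_lastTokens_iff_of_getLast?_phiK hlast]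

end AncestorPath

/-- **Ancestor characterization of last tokens.** For a nonempty string `s` and a
canonical token `x`: `x ∈ P(θ(s))` iff `x` is the last element of `φ_k(s)` at some
stage `0 ≤ k ≤ m`. -/
theorem ancestor_characterization [Fintype α] (D : Dict α) (hD : ValidDict D)
    (s : List α) (hs : s ≠ []) (x : Token α) (hx : IsCanonical D x) :
    InPath D (theta D s) x ↔ ∃ k ≤ D.length, (phiK D k s).getLast? = some x :=
  ancestor_characterization_general D hs x

end BPE
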